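/- Let G be a finite group, H a subgroup of G, and f : G → ℂ a right H-invariant function, i.e., f(xh) = f(x) for all x ∈ G and h ∈ H. Then the skew spectrum of f is determined by its components at double-coset representatives: for every z ∈ G, h₁ ∈ H, h₂ ∈ H, and every unitary matrix representation ρ of G, r̂_{h₁ z h₂}(ρ)ᴴ · f̂(ρ) = ρ(h₁) · (r̂_z(ρ)ᴴ · f̂(ρ)), where r_w(x) = f(x) f(xw). In particular, the components indexed by z ranging over a transversal of the double cosets H\G/H determine all components via the invertible matrices ρ(h₁). -/

import Mathlib

/-! Right `H`-invariance gives `r_{h₁zh₂}(x) = f(x) f(x h₁ z h₂) = f(x h₁) f(x h₁ z) = r_z(x h₁)`, so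
`r_{h₁zh₂}` is a right translate of `r_z`. Right translation by `h₁` multiplies the Fourier transform
on the right by `ρ(h₁⁻¹)` (`ftrans_translate`); after taking the conjugate transpose this becomes
left multiplication by `ρ(h₁⁻¹)ᴴ`, which is `ρ(h₁)` by unitarity. -/

open Matrix BigOperators

/-- The Fourier transform of `f : G → ℂ` at a matrix representation `ρ`:
`f̂(ρ) = Σ_{x∈G} f(x) ρ(x)`. -/
noncomputable def ftrans {G : Type*} [Group G] [Fintype G] {d : ℕ}
    (f : G → ℂ) (ρ : G →* Matrix (Fin d) (Fin d) ℂ) : Matrix (Fin d) (Fin d) ℂ :=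
  ∑ x : G, f x • ρ x

theorem ftrans_translate {G : Type*} [Group G] [Fintype G] {d : ℕ}
    (f : G → ℂ) (ρ : G →* Matrix (Fin d) (Fin d) ℂ) (a : G) :
    ftrans (fun x => f (x * a)) ρ = ftrans f ρ * ρ a⁻¹ := by
  unfold ftrans
  rw [Finset.sum_mul]
  refine Fintype.sum_equiv (Equiv.mulRight a) _ _ fun x => ?_
  rw [Equiv.coe_mulRight, Matrix.smul_mul, ← map_mul, mul_inv_cancel_right]

/-- for right `H`-invariant `f`, the skew spectrum is determined by
its components at double-coset representatives: for `h₁, h₂ ∈ H` and unitary `ρ`,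
`r̂_{h₁zh₂}(ρ)ᴴ * f̂(ρ) = ρ(h₁) * (r̂_z(ρ)ᴴ * f̂(ρ))`, where `r_w(x) = f(x) f(xw)`. -/
theorem skew_spectrum_double_coset {G : Type*} [Group G] [Fintype G]
    (H : Subgroup G) (f : G → ℂ) (hf : ∀ x : G, ∀ h ∈ H, f (x * h) = f x)
    (z : G) (h₁ h₂ : G) (hh₁ : h₁ ∈ H) (hh₂ : h₂ ∈ H)
    {d : ℕ} (ρ : G →* Matrix (Fin d) (Fin d) ℂ)
    (hρ : ∀ x : G, (ρ x)ᴴ * ρ x = 1) :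
    (ftrans (fun x => f x * f (x * (h₁ * z * h₂))) ρ)ᴴ * ftrans f ρ =
      ρ h₁ * ((ftrans (fun x => f x * f (x * z)) ρ)ᴴ * ftrans f ρ) := by
  have hr : (fun x => f x * f (x * (h₁ * z * h₂))) =
      fun x => (fun y => f y * f (y * z)) (x * h₁) := by
    funext x
    simp only [← mul_assoc, hf _ _ hh₁, hf _ _ hh₂]
  have ht : ftrans (fun x => f x * f (x * (h₁ * z * h₂))) ρ =
      ftrans (fun x => f x * f (x * z)) ρ * ρ h₁⁻¹ :=
    (congrArg (fun r => ftrans r ρ) hr).trans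
      (ftrans_translate (fun y => f y * f (y * z)) ρ h₁)
  have hu : (ρ h₁⁻¹)ᴴ = ρ h₁ := by
    calc (ρ h₁⁻¹)ᴴ = (ρ h₁⁻¹)ᴴ * (ρ h₁⁻¹ * ρ h₁) := by
          rw [← map_mul, inv_mul_cancel, map_one, mul_one]
      _ = ρ h₁ := by rw [← mul_assoc, hρ, one_mul]
  rw [ht, conjTranspose_mul, hu, mul_assoc]
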